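/- For every nonnegative integer n, b'₅(125n+21) ≡ b'₅(5n+1) (mod 5). -/

import Mathlib

/-- `b5' n` is the number of partitions of `n` into distinct parts,
none of which is divisible by `5` (with `b5' 0 = 1`). -/
def b5' (n : ℕ) : ℕ :=
  ((Nat.Partition.distincts n).filter (fun p => ∀ i ∈ p.parts, ¬ (5 ∣ i))).card

/-
Everything happens in `𝔽₅⟦X⟧`. Write `fₖ = ∏ (1 - X ^ (k * i))`, `φ = ∑ (-1)ᵏ X ^ k²`,
`ψ = ∑ X ^ (k(k + 1)/2)`, both over `k ∈ ℤ`, and let `Uᵣ` extract the coefficients whose index is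
`r` modulo `5`; it commutes with multiplication by a fifth power up to taking the root. Since
`φ f₂ = f₁²`, `ψ f₁ = 2 f₂²` and `B f₂⁴ = f₁⁴` for the generating function `B`, the three
extractions leading from `n` to `125 n + 21` reduce to those of `φ² f₂³`, `ψ³` and `φ³`:
`U₁ B = φ⁶ f₂²` and `U₀ (U₄ (φ⁶ f₂²)) = φ⁶ f₂²`.

The series `φ²`, `ψ²` and `φ f₂³` are theta series over cosets of `2ℤ[i]`. A Gaussian integer of
norm divisible by `5` is a multiple of `1 + 2i` or of `1 - 2i`, which makes them eigenvectors of the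
Hecke operator at `5`. They are related to the cubes above by the fact that `φ - φ²⁵` and
`ψ - X³ ψ²⁵` only have exponents in few residue classes modulo `5`.
-/

namespace FiveRegular

open Finset TrivSqZeroExt
open scoped DualNumber

section FiniteTripleProduct

variable {R : Type*} [CommRing R]

/-- The triangular number `k * (k + 1) / 2`, for every integer `k`. -/
def triangular (k : ℤ) : ℕ := (k * (k + 1) / 2).toNat

theorem two_mul_triangular (k : ℤ) : 2 * (triangular k : ℤ) = k * (k + 1) := by
  have h_nonneg : 0 ≤ k * (k + 1) / 2 := by
    rcases le_or_gt 0 k with hk | hk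
    · positivity
    · exact Int.ediv_nonneg (by nlinarith) (by norm_num)
  rw [triangular, Int.toNat_of_nonneg h_nonneg,
    Int.mul_ediv_cancel' (Int.even_mul_succ_self k).two_dvd]

theorem triangular_add_triangular_neg (k : ℤ) :
    triangular k + triangular (-k) = k.natAbs ^ 2 := by
  zify
  linarith [two_mul_triangular k, two_mul_triangular (-k), sq_abs k]

theorem triangular_neg_add_one (k : ℤ) : triangular (-(k + 1)) = triangular k := by
  zify
  linarith [two_mul_triangular k, two_mul_triangular (-(k + 1))]

theorem natAbs_le_triangular_add_one (k : ℤ) : k.natAbs ≤ triangular k + 1 := by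
  zify
  rcases abs_cases k with ⟨hk, _⟩ | ⟨hk, _⟩ <;> nlinarith [two_mul_triangular k]

/-- The `q`-Pochhammer symbol `(p; p)_n`. -/
def qPochhammer (p : R) (n : ℕ) : R := ∏ i ∈ range n, (1 - p ^ (i + 1))

theorem qPochhammer_succ (p : R) (n : ℕ) :
    qPochhammer p (n + 1) = qPochhammer p n * (1 - p ^ (n + 1)) :=
  prod_range_succ _ n

theorem isCoprime_pow_qPochhammer (p : R) (m n : ℕ) : IsCoprime (p ^ m) (qPochhammer p n) :=
  (IsCoprime.prod_right fun i _ ↦ ⟨p ^ i, 1, by ring⟩).pow_left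

theorem pow_succ_dvd_qPochhammer_sub (p : R) {m n : ℕ} (h : m ≤ n) :
    p ^ (m + 1) ∣ qPochhammer p n - qPochhammer p m := by
  induction n, h using Nat.le_induction with
  | base => simp
  | succ n hmn ih =>
    have hdvd : p ^ (m + 1) ∣ qPochhammer p n * p ^ (n + 1) :=
      (pow_dvd_pow p (by lia)).mul_left _
    rw [qPochhammer_succ]
    convert ih.sub hdvd using 1
    ring

/-- The Gaussian binomial coefficient with base `p`, defined by the `q`-Pascal rule. -/
def gaussBinom (p : R) : ℕ → ℕ → R
  | _, 0 => 1
  | 0, _ + 1 => 0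
  | n + 1, j + 1 => gaussBinom p n j + p ^ (j + 1) * gaussBinom p n (j + 1)

theorem gaussBinom_zero_right (p : R) (n : ℕ) : gaussBinom p n 0 = 1 := by cases n <;> rfl

theorem gaussBinom_succ_succ (p : R) (n j : ℕ) :
    gaussBinom p (n + 1) (j + 1) = gaussBinom p n j + p ^ (j + 1) * gaussBinom p n (j + 1) :=
  rfl

theorem gaussBinom_eq_zero_of_lt (p : R) {n j : ℕ} (h : n < j) : gaussBinom p n j = 0 := by
  induction n generalizing j with
  | zero => obtain ⟨j, rfl⟩ := Nat.exists_eq_succ_of_ne_zero h.ne'; rfl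
  | succ n ih =>
    obtain ⟨j, rfl⟩ := Nat.exists_eq_succ_of_ne_zero (Nat.ne_zero_of_lt h)
    rw [Nat.succ_eq_add_one, gaussBinom_succ_succ, ih (by lia), ih (by lia), mul_zero, add_zero]

theorem gaussBinom_self (p : R) (n : ℕ) : gaussBinom p n n = 1 := by
  induction n with
  | zero => rfl
  | succ n ih =>
    rw [gaussBinom_succ_succ, ih, gaussBinom_eq_zero_of_lt p n.lt_succ_self, mul_zero, add_zero]

theorem gaussBinom_add_mul_qPochhammer (p : R) (i j : ℕ) :
    gaussBinom p (i + j) i * qPochhammer p i * qPochhammer p j = qPochhammer p (i + j) := by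
  induction i generalizing j with
  | zero => simp [gaussBinom_zero_right, qPochhammer]
  | succ i ihi =>
    induction j with
    | zero => simp [gaussBinom_self, qPochhammer]
    | succ j ihj =>
      have h := ihi (j + 1)
      rw [show i + 1 + j = i + (j + 1) by ring, qPochhammer_succ p i] at ihj
      rw [qPochhammer_succ p j] at h
      rw [show i + 1 + (j + 1) = i + (j + 1) + 1 by ring, gaussBinom_succ_succ,
        qPochhammer_succ p i, qPochhammer_succ p j, qPochhammer_succ p (i + (j + 1))]
      linear_combination (1 - p ^ (i + 1)) * h + p ^ (i + 1) * (1 - p ^ (j + 1)) * ihj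

theorem one_sub_pow_mul_gaussBinom (p : R) {n j : ℕ} (h : j ≤ n) :
    (1 - p ^ (n - j)) * gaussBinom p n j = (1 - p ^ (j + 1)) * gaussBinom p n (j + 1) := by
  induction n generalizing j with
  | zero =>
    obtain rfl : j = 0 := by lia
    simp [gaussBinom]
  | succ n ih =>
    rcases h.eq_or_lt with rfl | hj
    · simp [gaussBinom_eq_zero_of_lt p (Nat.lt_succ_self (n + 1))]
    cases j with
    | zero =>
      have h0 := ih n.zero_le
      simp only [gaussBinom_zero_right, gaussBinom_succ_succ, Nat.sub_zero, zero_add] at h0 ⊢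
      linear_combination p * h0
    | succ j =>
      obtain ⟨d, rfl⟩ := Nat.exists_eq_add_of_le (Nat.lt_succ_iff.mp hj)
      have h1 := ih (j := j) (by lia)
      have h2 := ih (j := j + 1) (by lia)
      rw [show j + 1 + d - j = d + 1 by lia] at h1
      rw [show j + 1 + d - (j + 1) = d by lia] at h2
      rw [show j + 1 + d + 1 - (j + 1) = d + 1 by lia, gaussBinom_succ_succ, gaussBinom_succ_succ]
      linear_combination h1 + p ^ (j + 1 + 1) * h2

theorem gaussBinom_succ_succ' (p : R) {n j : ℕ} (h : j ≤ n) :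
    gaussBinom p (n + 1) (j + 1) = p ^ (n - j) * gaussBinom p n j + gaussBinom p n (j + 1) := by
  rw [gaussBinom_succ_succ]
  linear_combination one_sub_pow_mul_gaussBinom p h

theorem sum_gaussBinom_mul (p : R) (n : ℕ) (f : ℕ → R) :
    ∑ j ∈ range (n + 1), gaussBinom p n j * f j =
      f 0 + ∑ j ∈ range (n + 1), gaussBinom p n (j + 1) * f (j + 1) := by
  rw [sum_range_succ', sum_range_succ _ n, gaussBinom_eq_zero_of_lt p n.lt_succ_self,
    gaussBinom_zero_right]
  ring

theorem sum_gaussBinom_succ_mul (p : R) (n : ℕ) (f : ℕ → R) :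
    ∑ j ∈ range (n + 2), gaussBinom p (n + 1) j * f j =
      ∑ j ∈ range (n + 1), gaussBinom p n j * (f (j + 1) + p ^ j * f j) := by
  simp only [mul_add, sum_add_distrib]
  rw [sum_gaussBinom_mul p n fun j ↦ p ^ j * f j, sum_range_succ', gaussBinom_zero_right]
  simp only [gaussBinom_succ_succ, add_mul, sum_add_distrib]
  simp only [mul_assoc, mul_left_comm, pow_zero]
  ring

theorem sum_gaussBinom_succ_mul' (p : R) (n : ℕ) (f : ℕ → R) :
    ∑ j ∈ range (n + 2), gaussBinom p (n + 1) j * f j =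
      ∑ j ∈ range (n + 1), gaussBinom p n j * (p ^ (n - j) * f (j + 1) + f j) := by
  have hpascal : ∑ j ∈ range (n + 1), gaussBinom p (n + 1) (j + 1) * f (j + 1) =
      ∑ j ∈ range (n + 1), (gaussBinom p n j * (p ^ (n - j) * f (j + 1)) +
        gaussBinom p n (j + 1) * f (j + 1)) :=
    sum_congr rfl fun j hj ↦ by
      rw [gaussBinom_succ_succ' p (Nat.lt_succ_iff.mp (mem_range.mp hj))]
      ring
  simp only [mul_add, sum_add_distrib]
  rw [sum_gaussBinom_mul p n f, sum_range_succ', gaussBinom_zero_right, hpascal, sum_add_distrib]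
  ring

/-- The `k`-th term of the bilateral series in the Jacobi triple product, written with two variables
`z` and `w` whose product is the base `q`, so that no negative power occurs. -/
def tripleTerm (z w : R) (k : ℤ) : R := z ^ triangular k * w ^ triangular (-k)

theorem tripleTerm_neg (z w : R) (k : ℤ) : tripleTerm z w (-k) = tripleTerm w z k := by
  rw [tripleTerm, tripleTerm, neg_neg, mul_comm]

theorem tripleTerm_self (x : R) (k : ℤ) : tripleTerm x x k = x ^ k.natAbs ^ 2 := by
  rw [tripleTerm, ← pow_add, triangular_add_triangular_neg]

theorem tripleTerm_one_right (x : R) (k : ℤ) : tripleTerm x 1 k = x ^ triangular k := by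
  rw [tripleTerm, one_pow, mul_one]

theorem mul_pow_mul_tripleTerm (z w : R) {k : ℤ} {r d : ℕ} (h : (r : ℤ) = k + d) :
    z * (z * w) ^ r * tripleTerm z w k = (z * w) ^ d * tripleTerm z w (k + 1) := by
  have hz : 1 + r + triangular k = d + triangular (k + 1) := by
    zify; linarith [two_mul_triangular k, two_mul_triangular (k + 1)]
  have hw : r + triangular (-k) = d + triangular (-(k + 1)) := by
    zify; linarith [two_mul_triangular (-k), two_mul_triangular (-(k + 1))]
  calc z * (z * w) ^ r * tripleTerm z w k
      = z ^ (1 + r + triangular k) * w ^ (r + triangular (-k)) := by rw [tripleTerm]; ring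
    _ = (z * w) ^ d * tripleTerm z w (k + 1) := by rw [hz, hw, tripleTerm]; ring

theorem mul_pow_mul_tripleTerm' (z w : R) {k : ℤ} {s d : ℕ} (h : (s : ℤ) = d - k) :
    w * (z * w) ^ s * tripleTerm z w k = (z * w) ^ d * tripleTerm z w (k - 1) := by
  have hneg := mul_pow_mul_tripleTerm w z (k := -k) (r := s) (d := d) (by linarith)
  rwa [tripleTerm_neg, mul_comm w z, show -k + 1 = -(k - 1) by ring, tripleTerm_neg] at hneg

theorem prod_one_add_mul_prod_one_add (z w : R) (r s : ℕ) :
    (∏ i ∈ range r, (1 + z * (z * w) ^ i)) * ∏ i ∈ range s, (1 + w * (z * w) ^ i) =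
      ∑ j ∈ range (r + s + 1), gaussBinom (z * w) (r + s) j * tripleTerm z w (j - s) := by
  induction r with
  | zero =>
    induction s with
    | zero => simp [gaussBinom, tripleTerm, triangular]
    | succ s ih =>
      simp only [range_zero, prod_empty, one_mul, zero_add] at ih ⊢
      rw [prod_range_succ, ih, sum_gaussBinom_succ_mul, sum_mul]
      refine sum_congr rfl fun j _ ↦ ?_
      push_cast
      rw [show (j : ℤ) + 1 - (s + 1) = j - s by ring, show (j : ℤ) - (s + 1) = j - s - 1 by ring]
      linear_combination gaussBinom (z * w) s j *
        mul_pow_mul_tripleTerm' z w (k := j - s) (s := s) (d := j) (by ring)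
  | succ r ih =>
    rw [prod_range_succ, mul_right_comm, ih, show r + 1 + s = r + s + 1 by ring,
      sum_gaussBinom_succ_mul', sum_mul]
    refine sum_congr rfl fun j hj ↦ ?_
    have hjle : j ≤ r + s := Nat.lt_succ_iff.mp (mem_range.mp hj)
    rw [Nat.cast_succ, show (j : ℤ) + 1 - s = j - s + 1 by ring]
    linear_combination gaussBinom (z * w) (r + s) j *
      mul_pow_mul_tripleTerm z w (k := j - s) (r := r) (d := r + s - j) (by lia)

theorem pow_natAbs_sub_one_dvd_tripleTerm (z w : R) (k : ℤ) :
    (z * w) ^ (k.natAbs - 1) ∣ tripleTerm z w k := by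
  have hz := natAbs_le_triangular_add_one k
  have hw := natAbs_le_triangular_add_one (-k)
  rw [Int.natAbs_neg] at hw
  rw [mul_pow, tripleTerm]
  exact mul_dvd_mul (pow_dvd_pow z (by lia)) (pow_dvd_pow w (by lia))

theorem pow_succ_dvd_qPochhammer_mul_gaussBinom_sub_one (p : R) {m n a b : ℕ}
    (hn : m ≤ n) (ha : m ≤ a) (hb : m ≤ b) :
    p ^ (m + 1) ∣ qPochhammer p n * gaussBinom p (a + b) a - 1 := by
  have hcoprime := (isCoprime_pow_qPochhammer p (m + 1) a).mul_right
    (isCoprime_pow_qPochhammer p (m + 1) b)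
  refine hcoprime.dvd_of_dvd_mul_right ?_
  have hna := (pow_succ_dvd_qPochhammer_sub p hn).sub (pow_succ_dvd_qPochhammer_sub p ha)
  have hb' := (pow_succ_dvd_qPochhammer_sub p (hb.trans (Nat.le_add_left b a))).sub
    (pow_succ_dvd_qPochhammer_sub p hb)
  convert (hna.mul_right (qPochhammer p (a + b))).add (hb'.mul_left (qPochhammer p a)) using 1
  linear_combination qPochhammer p n * gaussBinom_add_mul_qPochhammer p a b

theorem pow_dvd_tripleProduct_sub_sum (z w : R) (n : ℕ) :
    (z * w) ^ n ∣ (∏ i ∈ range n, (1 + z * (z * w) ^ i)) * (∏ i ∈ range n, (1 + w * (z * w) ^ i)) *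
      qPochhammer (z * w) n - ∑ k ∈ Icc (-n : ℤ) n, tripleTerm z w k := by
  have hreindex : ∑ k ∈ Icc (-n : ℤ) n, tripleTerm z w k =
      ∑ j ∈ range (n + n + 1), tripleTerm z w (j - n) :=
    sum_nbij' (fun k ↦ (k + n).toNat) (fun j ↦ (j : ℤ) - n) (by simp only [mem_Icc, mem_range]; lia)
      (by simp only [mem_Icc, mem_range]; lia) (by simp only [mem_Icc]; lia) (by simp)
      fun k hk ↦ by rw [Int.toNat_of_nonneg (by linarith [(mem_Icc.mp hk).1]), add_sub_cancel_right]
  rw [prod_one_add_mul_prod_one_add, hreindex, sum_mul, ← sum_sub_distrib]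
  refine dvd_sum fun j hj ↦ ?_
  obtain ⟨b, hb⟩ := Nat.exists_eq_add_of_le (Nat.lt_succ_iff.mp (mem_range.mp hj))
  have hcoeff := pow_succ_dvd_qPochhammer_mul_gaussBinom_sub_one (z * w)
    (m := n - ((j : ℤ) - n).natAbs) (n := n) (a := j) (b := b) (by lia) (by lia) (by lia)
  have hpow : (z * w) ^ n ∣ (z * w) ^ (n - ((j : ℤ) - n).natAbs + 1 + (((j : ℤ) - n).natAbs - 1)) :=
    pow_dvd_pow _ (by lia)
  rw [pow_add] at hpow
  convert hpow.trans (mul_dvd_mul hcoeff (pow_natAbs_sub_one_dvd_tripleTerm z w (j - n))) using 1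
  rw [hb]
  ring

/- Over the dual numbers `w = -1 + ε` turns the first factor of the triple product into `ε`, so that
comparing `ε`-components differentiates the triple product identity at the zero `w = -1`. -/
theorem snd_tripleTerm_dualNumber (x : R) (k : ℤ) :
    (tripleTerm (-((1 + ε) * inl x) : R[ε]) (-(1 - ε)) k).snd =
      (-1) ^ k.natAbs * k * x ^ triangular k := by
  have hsign : (-1 : R) ^ triangular k * (-1) ^ triangular (-k) = (-1) ^ k.natAbs := by
    rw [← pow_add, triangular_add_triangular_neg]
    exact neg_one_pow_congr (by simp [Nat.even_pow])
  have hdiff : (triangular k - triangular (-k) : R) = k := by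
    have hint : (triangular k - triangular (-k) : ℤ) = k := by
      linarith [two_mul_triangular k, two_mul_triangular (-k)]
    exact_mod_cast congrArg (Int.cast : ℤ → R) hint
  rw [← hsign, ← hdiff, tripleTerm, neg_pow, neg_pow (1 - ε), mul_pow]
  simp [snd_pow]
  ring

theorem snd_mul_eps_mul (a b c : R[ε]) : (a * (b * ε) * c).snd = a.fst * b.fst * c.fst := by
  simp

theorem pow_dvd_qPochhammer_cube_sub_sum (x : R) (n : ℕ) :
    x ^ (n + 1) ∣ qPochhammer x (n + 1) * qPochhammer x n * qPochhammer x (n + 1) -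
      ∑ k ∈ Icc (-(n + 1 : ℕ) : ℤ) (n + 1 : ℕ), (-1) ^ k.natAbs * k * x ^ triangular k := by
  have hbase : (-((1 + ε) * inl x) : R[ε]) * -(1 - ε) = inl x := by
    linear_combination -inl x * (DualNumber.eps_mul_eps (R := R))
  have hfst_prod (s : Finset ℕ) (f : ℕ → R[ε]) : (∏ i ∈ s, f i).fst = ∏ i ∈ s, (f i).fst :=
    map_prod (fstHom R R R) f s
  have heps : ∏ i ∈ range (n + 1), (1 + -(1 - ε) * inl x ^ i : R[ε]) =
      (∏ i ∈ range n, (1 + -(1 - ε) * inl x ^ (i + 1))) * ε := by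
    rw [prod_range_succ', pow_zero, mul_one, show (1 + -(1 - ε) : R[ε]) = ε by ring]
  obtain ⟨c, hc⟩ := pow_dvd_tripleProduct_sub_sum (-((1 + ε) * inl x) : R[ε]) (-(1 - ε)) (n + 1)
  rw [hbase, heps] at hc
  refine ⟨c.snd, ?_⟩
  have hsnd := congrArg snd hc
  rw [snd_sub, snd_mul_eps_mul, snd_sum, inl_pow, inl_mul_eq_smul, snd_smul] at hsnd
  simp only [snd_tripleTerm_dualNumber, qPochhammer, hfst_prod] at hsnd
  simpa [qPochhammer, sub_eq_add_neg, pow_succ'] using hsnd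

end FiniteTripleProduct

section InfiniteTripleProduct

open PowerSeries Filter Topology
open scoped PowerSeries.WithPiTopology

variable {R : Type*} [CommRing R] [TopologicalSpace R]

theorem multipliable_one_add_mul_pow {p : R⟦X⟧} (hp : X ∣ p) (z : R⟦X⟧) :
    Multipliable fun i : ℕ ↦ 1 + z * p ^ i := by
  refine WithPiTopology.multipliable_one_add_of_tendsto_order_atTop_nhds_top R ?_
  refine ENat.tendsto_nhds_top_iff_natCast_lt.mpr fun n ↦ ?_
  filter_upwards [eventually_gt_atTop n] with i hi
  refine (Nat.cast_lt.mpr hi).trans_le (nat_le_order _ i ?_)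
  exact X_pow_dvd_iff.mp ((pow_dvd_pow_of_dvd hp i).mul_left z)

theorem multipliable_one_add_pow_succ {x : R⟦X⟧} (hx : X ∣ x) :
    Multipliable fun i : ℕ ↦ 1 + x ^ (i + 1) :=
  (multipliable_one_add_mul_pow hx x).congr fun i ↦ by ring

theorem multipliable_one_sub_pow_succ {x : R⟦X⟧} (hx : X ∣ x) :
    Multipliable fun i : ℕ ↦ 1 - x ^ (i + 1) :=
  (multipliable_one_add_mul_pow hx (-x)).congr fun i ↦ by ring

/-- The infinite product `(x; x)_∞` of a power series `x` without constant term, Euler's `φ(x)`. -/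
noncomputable def eulerProd (x : R⟦X⟧) : R⟦X⟧ := ∏' i : ℕ, (1 - x ^ (i + 1))

theorem tendsto_qPochhammer {x : R⟦X⟧} (hx : X ∣ x) :
    Tendsto (qPochhammer x) atTop (𝓝 (eulerProd x)) :=
  (multipliable_one_sub_pow_succ hx).tendsto_prod_tprod_nat

variable [T2Space R]

theorem hasSum_of_X_pow_dvd {f : ℤ → R⟦X⟧} {P : ℕ → R⟦X⟧} {a : R⟦X⟧} (hP : Tendsto P atTop (𝓝 a))
    (hf : ∀ k, X ^ (k.natAbs - 1) ∣ f k) (hdvd : ∀ n, X ^ n ∣ P n - ∑ k ∈ Icc (-n : ℤ) n, f k) :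
    HasSum f a := by
  rw [WithPiTopology.hasSum_iff_hasSum_coeff]
  intro d
  have hzero (n : ℕ) (hn : d + 2 ≤ n) : ∀ k ∉ Icc (-n : ℤ) n, coeff d (f k) = 0 := fun k hk ↦
    X_pow_dvd_iff.mp (hf k) d (by rw [mem_Icc] at hk; lia)
  have hpartial (n : ℕ) (hn : d + 2 ≤ n) :
      coeff d (P n) = ∑ k ∈ Icc (-(d + 2 : ℕ) : ℤ) (d + 2 : ℕ), coeff d (f k) := by
    have hcoeff := X_pow_dvd_iff.mp (hdvd n) d (by lia)
    rw [map_sub, map_sum, sub_eq_zero] at hcoeff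
    rw [hcoeff]
    exact (sum_subset (Icc_subset_Icc (by lia) (by lia)) fun k _ hk ↦ hzero _ le_rfl k hk).symm
  have hlim : coeff d a = ∑ k ∈ Icc (-(d + 2 : ℕ) : ℤ) (d + 2 : ℕ), coeff d (f k) :=
    tendsto_nhds_unique ((WithPiTopology.tendsto_iff_coeff_tendsto R P atTop a).mp hP d)
      (tendsto_const_nhds.congr' <|
        (eventually_ge_atTop (d + 2)).mono fun n hn ↦ (hpartial n hn).symm)
  rw [hlim]
  exact hasSum_sum_of_ne_finset_zero (hzero _ le_rfl)

variable [IsTopologicalRing R]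

theorem jacobi_triple_product {z w : R⟦X⟧} (h : X ∣ z * w) :
    HasSum (tripleTerm z w) ((∏' i : ℕ, (1 + z * (z * w) ^ i)) * (∏' i : ℕ, (1 + w * (z * w) ^ i)) *
      eulerProd (z * w)) :=
  hasSum_of_X_pow_dvd
    (((multipliable_one_add_mul_pow h z).tendsto_prod_tprod_nat.mul
      (multipliable_one_add_mul_pow h w).tendsto_prod_tprod_nat).mul (tendsto_qPochhammer h))
    (fun k ↦ (pow_dvd_pow_of_dvd h _).trans (pow_natAbs_sub_one_dvd_tripleTerm z w k))
    fun n ↦ (pow_dvd_pow_of_dvd h n).trans (pow_dvd_tripleProduct_sub_sum z w n)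

theorem hasSum_eulerProd_cube {x : R⟦X⟧} (hx : X ∣ x) :
    HasSum (fun k : ℤ ↦ (-1) ^ k.natAbs * k * x ^ triangular k) (eulerProd x ^ 3) := by
  have hlim := tendsto_qPochhammer hx
  have hpred := hlim.comp (tendsto_sub_atTop_nat 1)
  rw [show eulerProd x ^ 3 = eulerProd x * eulerProd x * eulerProd x by ring]
  refine hasSum_of_X_pow_dvd ((hlim.mul hpred).mul hlim) (fun k ↦ ?_) fun n ↦ ?_
  · have hk : k.natAbs - 1 ≤ triangular k := by grind [natAbs_le_triangular_add_one k]
    exact ((pow_dvd_pow X hk).trans (pow_dvd_pow_of_dvd hx _)).mul_left _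
  · cases n with
    | zero => simp
    | succ n =>
      exact (pow_dvd_pow_of_dvd hx (n + 1)).trans (pow_dvd_qPochhammer_cube_sub_sum x n)

theorem hasSum_two_mul_eulerProd_cube {x : R⟦X⟧} (hx : X ∣ x) :
    HasSum (fun k : ℤ ↦ (-1) ^ k.natAbs * (2 * k + 1) * x ^ triangular k)
      (2 * eulerProd x ^ 3) := by
  have hsum := hasSum_eulerProd_cube hx
  have hreflect := (Equiv.subLeft (-1 : ℤ)).hasSum_iff.mpr hsum
  rw [two_mul]
  convert hsum.add hreflect using 2 with k
  have hsign : (-1 : R⟦X⟧) ^ (-1 - k).natAbs = -(-1) ^ k.natAbs := by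
    rw [← mul_neg_one ((-1 : R⟦X⟧) ^ k.natAbs), ← pow_succ]
    exact neg_one_pow_congr (by grind)
  simp only [Function.comp_apply, Equiv.subLeft_apply]
  rw [hsign, show -1 - k = -(k + 1) by ring, triangular_neg_add_one]
  push_cast
  ring

theorem tprod_one_add_pow_mul_eulerProd {x : R⟦X⟧} (hx : X ∣ x) :
    (∏' i : ℕ, (1 + x ^ (i + 1))) * eulerProd x = eulerProd (x ^ 2) := by
  rw [eulerProd, eulerProd,
    ← (multipliable_one_add_pow_succ hx).tprod_mul (multipliable_one_sub_pow_succ hx)]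
  exact tprod_congr fun i ↦ by ring

theorem tprod_one_sub_odd_pow_mul_eulerProd {x : R⟦X⟧} (hx : X ∣ x) :
    (∏' i : ℕ, (1 - x ^ (2 * i + 1))) * eulerProd (x ^ 2) = eulerProd x := by
  have hx2 : X ∣ x ^ 2 := hx.trans (dvd_pow_self x two_ne_zero)
  have hodd : Multipliable fun i : ℕ ↦ 1 - x ^ (2 * i + 1) :=
    (multipliable_one_add_mul_pow hx2 (-x)).congr fun i ↦ by ring
  have heven (i : ℕ) : 1 - (x ^ 2) ^ (i + 1) = 1 - x ^ (2 * i + 1 + 1) := by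
    rw [← pow_mul]; rfl
  have hmul := (multipliable_one_sub_pow_succ hx2).congr heven
  rw [eulerProd, tprod_congr heven]
  exact tprod_even_mul_odd (f := fun i ↦ 1 - x ^ (i + 1)) hodd hmul

/-- Gauss' theta series `∑ (-1)^k x^(k^2)` over all integers `k`, usually denoted `φ(-x)`. -/
noncomputable def gaussTheta (x : R⟦X⟧) : R⟦X⟧ := ∑' k : ℤ, (-x) ^ k.natAbs ^ 2

/-- The theta series `∑ x^(k(k+1)/2)` over all integers `k`. Each triangular exponent occurs twice,
so this is `2 ψ(x)` in the usual notation. -/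
noncomputable def triangularTheta (x : R⟦X⟧) : R⟦X⟧ := ∑' k : ℤ, x ^ triangular k

theorem hasSum_gaussTheta {x : R⟦X⟧} (hx : X ∣ x) :
    HasSum (fun k : ℤ ↦ (-x) ^ k.natAbs ^ 2) (gaussTheta x) := by
  have h := jacobi_triple_product (z := -x) (w := -x) ((dvd_neg.mpr hx).mul_left (-x))
  simp only [funext (tripleTerm_self (-x))] at h
  exact h.summable.hasSum

theorem hasSum_triangularTheta {x : R⟦X⟧} (hx : X ∣ x) :
    HasSum (fun k : ℤ ↦ x ^ triangular k) (triangularTheta x) := by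
  have h := jacobi_triple_product (z := x) (w := 1) (hx.mul_right 1)
  simp only [funext (tripleTerm_one_right x)] at h
  exact h.summable.hasSum

theorem gaussTheta_mul_eulerProd {x : R⟦X⟧} (hx : X ∣ x) :
    gaussTheta x * eulerProd (x ^ 2) = eulerProd x ^ 2 := by
  have h := jacobi_triple_product (z := -x) (w := -x) ((dvd_neg.mpr hx).mul_left (-x))
  have hfactor (i : ℕ) : 1 + -x * (-x * -x) ^ i = 1 - x ^ (2 * i + 1) := by
    rw [neg_mul_neg, ← sq, ← pow_mul]; ring
  rw [funext (tripleTerm_self (-x)), tprod_congr hfactor, neg_mul_neg, ← sq x] at h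
  rw [gaussTheta, h.tsum_eq, ← tprod_one_sub_odd_pow_mul_eulerProd hx]
  ring

theorem triangularTheta_mul_eulerProd {x : R⟦X⟧} (hx : X ∣ x) :
    triangularTheta x * eulerProd x = 2 * eulerProd (x ^ 2) ^ 2 := by
  have h := jacobi_triple_product (z := x) (w := 1) (hx.mul_right 1)
  simp only [funext (tripleTerm_one_right x), mul_one, one_mul, ← pow_succ'] at h
  have hdouble : ∏' i : ℕ, (1 + x ^ i) = 2 * ∏' i : ℕ, (1 + x ^ (i + 1)) := by
    rw [tprod_eq_zero_mul' (f := fun i ↦ 1 + x ^ i) (multipliable_one_add_pow_succ hx), pow_zero,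
      one_add_one_eq_two]
  rw [triangularTheta, h.tsum_eq, hdouble, ← tprod_one_add_pow_mul_eulerProd hx]
  ring

end InfiniteTripleProduct

section DistinctParts

open PowerSeries
open scoped PowerSeries.WithPiTopology

variable {R : Type*} [CommRing R] [TopologicalSpace R] [T2Space R]

theorem hasProd_mk_card_distincts_filter (P : ℕ → Prop) [DecidablePred P] :
    HasProd (fun i ↦ if P (i + 1) then 1 + X ^ (i + 1) else 1)
      (mk fun n ↦ (#{c ∈ Nat.Partition.distincts n | ∀ i ∈ c.parts, P i} : R)) := by
  convert! Nat.Partition.hasProd_genFun (fun i c ↦ if c = 1 ∧ P i then (1 : R) else 0) using 1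
  · funext i
    rw [tsum_eq_single 0 fun j hj ↦ by simp [hj]]
    split_ifs <;> simp_all
  · ext n
    rw [coeff_mk, Nat.Partition.coeff_genFun, Nat.Partition.distincts, filter_filter, card_filter,
      Nat.cast_sum]
    refine sum_congr rfl fun c _ ↦ ?_
    rw [Finsupp.prod, prod_boole]
    simp [Multiset.nodup_iff_count_eq_one, forall_and]

theorem mk_card_distincts_filter_not_dvd_mul_tprod [IsTopologicalRing R] {m : ℕ} (hm : 0 < m) :
    mk (fun n ↦ (#{c ∈ Nat.Partition.distincts n | ∀ i ∈ c.parts, ¬ m ∣ i} : R)) *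
      ∏' i : ℕ, (1 + (X ^ m) ^ (i + 1)) = ∏' i : ℕ, (1 + X ^ (i + 1)) := by
  have hinj : (fun i ↦ m * i + (m - 1)).Injective := fun i j h ↦ by
    simpa [hm.ne'] using h
  have hmultiples : HasProd (fun i ↦ if m ∣ i + 1 then 1 + X ^ (i + 1) else 1)
      (∏' i : ℕ, (1 + (X ^ m : R⟦X⟧) ^ (i + 1))) := by
    rw [← hinj.hasProd_iff]
    · have hprod := (multipliable_one_add_pow_succ (dvd_pow_self (X : R⟦X⟧) hm.ne')).hasProd
      convert! hprod using 2 with i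
      have hi : m * i + (m - 1) + 1 = m * (i + 1) := by rw [mul_add]; lia
      rw [Function.comp_apply, hi, if_pos (dvd_mul_right m _), pow_mul]
    · refine fun i hi ↦ if_neg fun ⟨k, hk⟩ ↦ hi ⟨k - 1, ?_⟩
      obtain ⟨k, rfl⟩ := Nat.exists_eq_add_one_of_ne_zero (n := k) (by rintro rfl; simp at hk)
      rw [mul_add] at hk
      simp only [Nat.add_sub_cancel]
      lia
  rw [← ((hasProd_mk_card_distincts_filter _).mul hmultiples).tprod_eq]
  refine tprod_congr fun i ↦ ?_
  split_ifs with h <;> simp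

end DistinctParts

section Dissection

open PowerSeries
open scoped PowerSeries.WithPiTopology Pointwise

variable {R : Type*} [CommRing R]

/-- The `r`-th component of the `p`-dissection: `∑ aₙ Xⁿ` is sent to `∑ a_{pn+r} Xⁿ`. -/
noncomputable def dissect (p r : ℕ) : R⟦X⟧ →ₗ[R] R⟦X⟧ where
  toFun f := mk fun n ↦ coeff (p * n + r) f
  map_add' f g := by ext; simp
  map_smul' c f := by ext; simp

@[simp]
theorem coeff_dissect (p r n : ℕ) (f : R⟦X⟧) :
    coeff n (dissect p r f) = coeff (p * n + r) f :=
  coeff_mk n fun n ↦ coeff (p * n + r) f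

theorem hasSum_dissect [TopologicalSpace R] {ι : Type*} {f : ι → R⟦X⟧} {a : R⟦X⟧} (h : HasSum f a)
    (p r : ℕ) : HasSum (fun i ↦ dissect p r (f i)) (dissect p r a) := by
  rw [WithPiTopology.hasSum_iff_hasSum_coeff] at h ⊢
  simpa only [coeff_dissect] using fun n ↦ h (p * n + r)

theorem dissect_monomial {p r : ℕ} (hr : r < p) (n : ℕ) (c : R) :
    dissect p r (monomial (p * n + r) c) = monomial n c := by
  ext d
  have hp : p ≠ 0 := by lia
  simp [coeff_monomial, hp]

theorem dissect_monomial_of_mod_ne {p r m : ℕ} (hm : m % p ≠ r) (hr : r < p) (c : R) :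
    dissect p r (monomial m c) = 0 := by
  ext d
  rw [coeff_dissect, coeff_monomial, if_neg, map_zero]
  rintro rfl
  exact hm (by rw [Nat.mul_add_mod, Nat.mod_eq_of_lt hr])

theorem dissect_X_pow_mul (p r s : ℕ) (f : R⟦X⟧) :
    dissect p (r + s) (X ^ s * f) = dissect p r f := by
  ext d
  rw [coeff_dissect, coeff_dissect, ← add_assoc, mul_comm (X ^ s), coeff_mul_X_pow]

theorem dissect_expand_mul {p r : ℕ} (hr : r < p) (f g : R⟦X⟧) :
    dissect p r (expand p (by lia) f * g) = f * dissect p r g := by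
  have hp : p ≠ 0 := by lia
  ext d
  rw [coeff_dissect, coeff_mul, coeff_mul]
  symm
  refine sum_of_injOn (fun v ↦ (p * v.1, p * v.2 + r)) ?_ ?_ ?_ ?_
  · intro v _ w _ h
    simp only [Prod.mk.injEq, add_left_inj, mul_right_inj' hp] at h
    exact Prod.ext h.1 h.2
  · intro v hv
    rw [mem_coe, HasAntidiagonal.mem_antidiagonal] at hv ⊢
    rw [← hv]
    ring
  · intro v hv hrange
    rw [coeff_expand, if_neg, zero_mul]
    rintro ⟨i, hi⟩
    rw [HasAntidiagonal.mem_antidiagonal] at hv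
    have hid : i ≤ d := by
      by_contra! hdi
      have := Nat.mul_le_mul_left p (Nat.succ_le_of_lt hdi)
      lia
    refine hrange ⟨(i, d - i), ?_, Prod.ext hi.symm ?_⟩
    · rw [mem_coe, HasAntidiagonal.mem_antidiagonal]
      exact Nat.add_sub_cancel' hid
    · have := congrArg (p * ·) (Nat.add_sub_cancel' hid)
      simp only [mul_add] at this ⊢
      lia
  · intro v _
    simp [coeff_expand, hp]

variable {p : ℕ} [Fact p.Prime]

theorem expand_eq_pow (f : (ZMod p)⟦X⟧) :
    expand p (NeZero.ne p) f = f ^ p := by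
  have h := MvPowerSeries.map_frobenius_expand p (NeZero.ne p) (f := f)
  rwa [ZMod.frobenius_zmod, MvPowerSeries.map_id] at h

theorem dissect_pow_mul {r : ℕ} (hr : r < p) (f g : (ZMod p)⟦X⟧) :
    dissect p r (f ^ p * g) = f * dissect p r g := by
  rw [← expand_eq_pow, dissect_expand_mul hr]

theorem dissect_pow (f : (ZMod p)⟦X⟧) : dissect p 0 (f ^ p) = f := by
  have hone : dissect p 0 (1 : (ZMod p)⟦X⟧) = 1 := by
    simpa using dissect_monomial (NeZero.pos p) 0 (1 : ZMod p)
  rw [← mul_one (f ^ p), dissect_pow_mul (NeZero.pos p), hone, mul_one]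

/-- A power series is supported on a set `s` of residues modulo `p` if all its exponents reduce
to elements of `s`. -/
def SupportedOn (s : Finset (ZMod p)) (f : R⟦X⟧) : Prop :=
  ∀ n, coeff n f ≠ 0 → (n : ZMod p) ∈ s

namespace SupportedOn

variable {s t : Finset (ZMod p)} {f g : R⟦X⟧}

theorem mul (hf : SupportedOn s f) (hg : SupportedOn t g) : SupportedOn (s + t) (f * g) := by
  intro n hn
  rw [coeff_mul] at hn
  obtain ⟨v, hv, hne⟩ := exists_ne_zero_of_sum_ne_zero hn
  rw [← HasAntidiagonal.mem_antidiagonal.mp hv, Nat.cast_add]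
  exact add_mem_add (hf _ (left_ne_zero_of_mul hne)) (hg _ (right_ne_zero_of_mul hne))

theorem dissect_eq_zero (hf : SupportedOn s f) {r : ℕ} (hr : (r : ZMod p) ∉ s) :
    dissect p r f = 0 := by
  ext n
  rw [coeff_dissect, map_zero]
  by_contra hne
  exact hr (by simpa using hf _ hne)

theorem of_hasSum [TopologicalSpace R] [T2Space R] {ι : Type*} {F : ι → R⟦X⟧} (h : HasSum F f)
    (hF : ∀ i, SupportedOn s (F i)) : SupportedOn s f := by
  intro n hn
  contrapose! hn
  have hzero (i : ι) : coeff n (F i) = 0 := by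
    by_contra hne
    exact hn (hF i n hne)
  have hcoeff := (WithPiTopology.hasSum_iff_hasSum_coeff _).mp h n
  simp only [hzero] at hcoeff
  exact hcoeff.unique hasSum_zero

theorem monomial {n : ℕ} {c : R} (h : c ≠ 0 → (n : ZMod p) ∈ s) :
    SupportedOn s (monomial n c) := by
  intro d hd
  rw [coeff_monomial] at hd
  split_ifs at hd with hdn
  · exact hdn ▸ h hd
  · exact absurd rfl hd

end SupportedOn

end Dissection

section ThetaSeries

open PowerSeries Filter Topology
open scoped PowerSeries.WithPiTopology Pointwise

variable {ι κ : Type*}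

theorem hasSum_indicator_range_iff {M : Type*} [AddCommMonoid M] [TopologicalSpace M] {f : ι → M}
    {γ : κ → ι} (hγ : γ.Injective) {a : M} :
    HasSum ((Set.range γ).indicator f) a ↔ HasSum (fun w ↦ f (γ w)) a := by
  rw [← hγ.hasSum_iff fun v hv ↦ Set.indicator_of_notMem hv f]
  simp [Function.comp_def]

/-- `θ` is the theta series `∑ c v * X ^ Q v` with weights `c` and exponents `Q`, every exponent
occurring only finitely often. -/
structure IsThetaSeries {R : Type*} [CommRing R] [TopologicalSpace R] (Q : ι → ℕ) (c : ι → R)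
    (θ : R⟦X⟧) : Prop where
  tendsto : Tendsto Q cofinite atTop
  hasSum : HasSum (fun v ↦ monomial (Q v) (c v)) θ

section Ring

variable {R : Type*} [CommRing R] [TopologicalSpace R]

theorem summable_monomial {Q : ι → ℕ} (hQ : Tendsto Q cofinite atTop) (c : ι → R) :
    Summable fun v ↦ monomial (Q v) (c v) := by
  rw [WithPiTopology.summable_iff_summable_coeff]
  intro d
  refine summable_of_hasFiniteSupport ?_
  have hfin : {v | Q v ≤ d}.Finite := by
    simpa using eventually_cofinite.mp (hQ.eventually (eventually_gt_atTop d))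
  refine hfin.subset fun v hv ↦ ?_
  by_contra hlt
  exact hv ((coeff_monomial _ _ _).trans (if_neg fun hd ↦ hlt hd.ge))

theorem tendsto_add_cofinite {Q : ι → ℕ} {Q' : κ → ℕ} (hQ : Tendsto Q cofinite atTop)
    (hQ' : Tendsto Q' cofinite atTop) :
    Tendsto (fun v : ι × κ ↦ Q v.1 + Q' v.2) cofinite atTop := by
  rw [← coprod_cofinite]
  exact tendsto_sup.mpr
    ⟨tendsto_atTop_mono (fun v ↦ Nat.le_add_right _ _) (hQ.comp tendsto_comap),
      tendsto_atTop_mono (fun v ↦ Nat.le_add_left _ _) (hQ'.comp tendsto_comap)⟩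

theorem tendsto_cofinite_of_natAbs_le {Q : ℤ → ℕ} (hQ : ∀ k, k.natAbs ≤ Q k + 1) :
    Tendsto Q cofinite atTop := by
  refine tendsto_atTop.mpr fun n ↦ eventually_cofinite.mpr ?_
  refine (Set.finite_Icc (-(n + 1) : ℤ) (n + 1)).subset fun k hk ↦ ?_
  grind [hQ k]

namespace IsThetaSeries

variable {Q : ι → ℕ} {c : ι → R} {θ : R⟦X⟧}

theorem C_mul [IsTopologicalRing R] (h : IsThetaSeries Q c θ) (m : R) :
    IsThetaSeries Q (fun v ↦ m * c v) (C m * θ) where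
  tendsto := h.tendsto
  hasSum := by
    simpa only [← monomial_zero_eq_C_apply, monomial_mul_monomial, zero_add] using
      h.hasSum.mul_left (C m)

theorem mul [T2Space R] [IsTopologicalRing R] {Q' : κ → ℕ} {c' : κ → R} {θ' : R⟦X⟧}
    (h : IsThetaSeries Q c θ) (h' : IsThetaSeries Q' c' θ') :
    IsThetaSeries (fun v : ι × κ ↦ Q v.1 + Q' v.2) (fun v ↦ c v.1 * c' v.2) (θ * θ') := by
  have hQ := tendsto_add_cofinite h.tendsto h'.tendsto
  have hsum := summable_monomial hQ fun v ↦ c v.1 * c' v.2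
  simp only [← monomial_mul_monomial] at hsum
  have hmul := h.hasSum.mul h'.hasSum hsum
  simp only [monomial_mul_monomial] at hmul
  exact ⟨hQ, hmul⟩

theorem supportedOn [T2Space R] {p : ℕ} [Fact p.Prime] {s : Finset (ZMod p)}
    (h : IsThetaSeries Q c θ) (hs : ∀ v, c v ≠ 0 → (Q v : ZMod p) ∈ s) : SupportedOn s θ :=
  .of_hasSum h.hasSum fun v ↦ .monomial (hs v)

end IsThetaSeries

end Ring

section ZMod

variable {p : ℕ} [Fact p.Prime]

instance : CharP (ZMod p)⟦X⟧ p :=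
  charP_of_injective_ringHom C_injective p

namespace IsThetaSeries

variable {Q : ι → ℕ} {c : ι → ZMod p} {θ : (ZMod p)⟦X⟧}

theorem X_pow_mul_pow_card_pow (h : IsThetaSeries Q c θ) (k r : ℕ) :
    IsThetaSeries (fun v ↦ p ^ k * Q v + r) c (X ^ r * θ ^ p ^ k) where
  tendsto := tendsto_atTop_mono
    (fun v ↦ (Nat.le_mul_of_pos_left (Q v) (NeZero.pos (p ^ k))).trans (Nat.le_add_right _ r))
    h.tendsto
  hasSum := by
    have hpow := (h.hasSum.map (iterateFrobenius (ZMod p)⟦X⟧ p k)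
      (continuous_pow (p ^ k))).mul_left (X ^ r)
    have hterm (v : ι) : X ^ r * monomial (Q v) (c v) ^ p ^ k =
        monomial (p ^ k * Q v + r) (c v) := by
      rw [monomial_pow, ZMod.pow_card_pow, X_pow_eq, monomial_mul_monomial, one_mul, add_comm]
    simpa only [Function.comp_apply, iterateFrobenius_def, hterm] using hpow

theorem supportedOn_sub {γ : ι → ι} (hγ : γ.Injective) {k r : ℕ} {s : Finset (ZMod p)}
    (h : IsThetaSeries Q c θ) (hQ : ∀ w, Q (γ w) = p ^ k * Q w + r) (hc : ∀ w, c (γ w) = c w)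
    (hs : ∀ v ∉ Set.range γ, (Q v : ZMod p) ∈ s) :
    SupportedOn s (θ - X ^ r * θ ^ p ^ k) := by
  have hpow := (h.X_pow_mul_pow_card_pow k r).hasSum
  simp only [← hQ] at hpow
  have hrange : HasSum ((Set.range γ).indicator fun v ↦ PowerSeries.monomial (Q v) (c v))
      (X ^ r * θ ^ p ^ k) := by
    simpa only [hasSum_indicator_range_iff hγ, hc] using hpow
  have hcompl := h.hasSum.sub hrange
  rw [← Pi.sub_def, ← Set.indicator_compl] at hcompl
  refine .of_hasSum hcompl fun v ↦ ?_
  by_cases hv : v ∈ Set.range γ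
  · rw [Set.indicator_of_notMem (by simpa using hv)]
    intro n hn
    simp at hn
  · rw [Set.indicator_of_mem hv]
    exact .monomial fun _ ↦ hs v hv

theorem dissect_add_X_pow_mul_pow {r : ℕ} (hr : r < p) {α β γ : ι → ι}
    (h : IsThetaSeries Q c θ) (hα : α.Injective) (hβ : β.Injective) (hγ : γ.Injective)
    (hcover : ∀ v, Q v % p = r → v ∈ Set.range α ∪ Set.range β)
    (hinter : Set.range α ∩ Set.range β = Set.range γ)
    (hQα : ∀ w, Q (α w) = p * Q w + r) (hQβ : ∀ w, Q (β w) = p * Q w + r)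
    (hQγ : ∀ w, Q (γ w) = p * (p * Q w + r) + r) {m m' : ZMod p}
    (hcαβ : ∀ w, c (α w) + c (β w) = m * c w) (hcγ : ∀ w, c (γ w) = m' * c w) :
    dissect p r θ + C m' * (X ^ r * θ ^ p) = C m * θ := by
  set f : ι → (ZMod p)⟦X⟧ := fun v ↦ dissect p r (PowerSeries.monomial (Q v) (c v)) with hf
  have hrange {δ : ι → ι} (hδ : δ.Injective) {Q' : ι → ℕ} (hQ : ∀ w, Q (δ w) = p * Q' w + r)
      {a : (ZMod p)⟦X⟧} (ha : HasSum (fun w ↦ PowerSeries.monomial (Q' w) (c (δ w))) a) :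
      HasSum ((Set.range δ).indicator f) a := by
    simpa only [hasSum_indicator_range_iff hδ, hf, hQ, dissect_monomial hr] using ha
  have hα' := hrange hα hQα (summable_monomial h.tendsto _).hasSum
  have hβ' := hrange hβ hQβ (summable_monomial h.tendsto _).hasSum
  have hγ' := hrange hγ hQγ (a := C m' * (X ^ r * θ ^ p)) <| by
    simpa only [hcγ, pow_one] using ((h.X_pow_mul_pow_card_pow 1 r).C_mul m').hasSum
  have hf_zero : (Set.range α ∪ Set.range β).indicator f = f := by
    refine Set.indicator_eq_self.mpr fun v hv ↦ hcover v ?_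
    by_contra hne
    exact hv (dissect_monomial_of_mod_ne hne hr _)
  have hadd : ∑' w, PowerSeries.monomial (Q w) (c (α w)) +
      ∑' w, PowerSeries.monomial (Q w) (c (β w)) = C m * θ := by
    rw [← (summable_monomial h.tendsto _).tsum_add (summable_monomial h.tendsto _)]
    simpa only [← map_add, hcαβ] using (h.C_mul m).hasSum.tsum_eq
  have hunion := Set.indicator_union_add_inter f (Set.range α) (Set.range β)
  rw [hf_zero, hinter] at hunion
  rw [← hadd]
  refine ((hasSum_dissect h.hasSum p r).add hγ').unique ?_
  convert hα'.add hβ' using 1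
  exact hunion

end IsThetaSeries

end ZMod

end ThetaSeries

section HeckeFive

open PowerSeries
open scoped PowerSeries.WithPiTopology

instance : Fact (Nat.Prime 5) := ⟨Nat.prime_five⟩

theorem five_dvd_sub_or_five_dvd_add {a b : ℤ} (h : 5 ∣ a ^ 2 + b ^ 2) :
    5 ∣ b - 2 * a ∨ 5 ∣ b + 2 * a := by
  apply Int.Prime.dvd_mul' Nat.prime_five
  rw [show (b - 2 * a) * (b + 2 * a) = a ^ 2 + b ^ 2 - 5 * a ^ 2 by ring]
  exact h.sub (dvd_mul_right _ _)

/-- A parametrization of a coset of `2ℤ[i]` in the Gaussian integers by `v ↦ re v + im v * i`,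
together with the maps induced on the parameters by multiplication by `1 + 2i`, `1 - 2i` and `5`.
These preserve the coset because the multipliers are congruent to `1` modulo `2`. -/
structure GaussianCoset (ι : Type*) where
  re : ι → ℤ
  im : ι → ℤ
  ext_re_im : ∀ v w, re v = re w → im v = im w → v = w
  exists_of_even_sub : ∀ v x y, Even (x - re v) → Even (y - im v) → ∃ w, re w = x ∧ im w = y
  mulPi : ι → ι
  mulPiConj : ι → ι
  mulFive : ι → ι
  re_mulPi : ∀ w, re (mulPi w) = re w - 2 * im w
  im_mulPi : ∀ w, im (mulPi w) = im w + 2 * re w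
  re_mulPiConj : ∀ w, re (mulPiConj w) = re w + 2 * im w
  im_mulPiConj : ∀ w, im (mulPiConj w) = im w - 2 * re w
  re_mulFive : ∀ w, re (mulFive w) = 5 * re w
  im_mulFive : ∀ w, im (mulFive w) = 5 * im w

namespace GaussianCoset

variable {ι : Type*} (L : GaussianCoset ι)

theorem mulPi_injective : L.mulPi.Injective := fun v w h ↦ by
  have hre := congrArg L.re h
  have him := congrArg L.im h
  rw [re_mulPi, re_mulPi] at hre
  rw [im_mulPi, im_mulPi] at him
  exact L.ext_re_im v w (by lia) (by lia)

theorem mulPiConj_injective : L.mulPiConj.Injective := fun v w h ↦ by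
  have hre := congrArg L.re h
  have him := congrArg L.im h
  rw [re_mulPiConj, re_mulPiConj] at hre
  rw [im_mulPiConj, im_mulPiConj] at him
  exact L.ext_re_im v w (by lia) (by lia)

theorem mulFive_injective : L.mulFive.Injective := fun v w h ↦ by
  have hre := congrArg L.re h
  have him := congrArg L.im h
  rw [re_mulFive, re_mulFive] at hre
  rw [im_mulFive, im_mulFive] at him
  exact L.ext_re_im v w (by lia) (by lia)

theorem mem_range_mulPi {v : ι} : v ∈ Set.range L.mulPi ↔ 5 ∣ L.im v - 2 * L.re v := by
  constructor
  · rintro ⟨w, rfl⟩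
    exact ⟨L.im w, by rw [re_mulPi, im_mulPi]; ring⟩
  · rintro ⟨m, hm⟩
    obtain ⟨w, hre, him⟩ := L.exists_of_even_sub v (L.re v + 2 * m) m ⟨m, by ring⟩
      ⟨-L.re v - 2 * m, by lia⟩
    exact ⟨w, L.ext_re_im _ _ (by rw [re_mulPi]; lia) (by rw [im_mulPi]; lia)⟩

theorem mem_range_mulPiConj {v : ι} : v ∈ Set.range L.mulPiConj ↔ 5 ∣ L.im v + 2 * L.re v := by
  constructor
  · rintro ⟨w, rfl⟩
    exact ⟨L.im w, by rw [re_mulPiConj, im_mulPiConj]; ring⟩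
  · rintro ⟨m, hm⟩
    obtain ⟨w, hre, him⟩ := L.exists_of_even_sub v (L.re v - 2 * m) m ⟨-m, by ring⟩
      ⟨L.re v - 2 * m, by lia⟩
    exact ⟨w, L.ext_re_im _ _ (by rw [re_mulPiConj]; lia) (by rw [im_mulPiConj]; lia)⟩

theorem mem_range_mulFive {v : ι} : v ∈ Set.range L.mulFive ↔ 5 ∣ L.re v ∧ 5 ∣ L.im v := by
  constructor
  · rintro ⟨w, rfl⟩
    exact ⟨⟨L.re w, L.re_mulFive w⟩, ⟨L.im w, L.im_mulFive w⟩⟩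
  · rintro ⟨⟨x, hx⟩, ⟨y, hy⟩⟩
    obtain ⟨w, hre, him⟩ := L.exists_of_even_sub v x y ⟨-2 * x, by lia⟩ ⟨-2 * y, by lia⟩
    exact ⟨w, L.ext_re_im _ _ (by rw [re_mulFive]; lia) (by rw [im_mulFive]; lia)⟩

theorem range_mulPi_inter_range_mulPiConj :
    Set.range L.mulPi ∩ Set.range L.mulPiConj = Set.range L.mulFive := by
  ext v
  rw [Set.mem_inter_iff, mem_range_mulPi, mem_range_mulPiConj, mem_range_mulFive]
  lia

theorem dissect_five {Q : ι → ℕ} {c : ι → ZMod 5} {θ : (ZMod 5)⟦X⟧} (h : IsThetaSeries Q c θ)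
    {d r s : ℕ} (hd : d ≠ 0) (hnorm : ∀ v, L.re v ^ 2 + L.im v ^ 2 = d * Q v + s)
    (hr : r < 5) (hds : d * r = 4 * s) {m m' : ZMod 5}
    (hcPi : ∀ w, c (L.mulPi w) + c (L.mulPiConj w) = m * c w)
    (hcFive : ∀ w, c (L.mulFive w) = m' * c w) :
    dissect 5 r θ + C m' * (X ^ r * θ ^ 5) = C m * θ := by
  have hds' : (d * r : ℤ) = 4 * s := mod_cast hds
  have hQ {v : ι} {q : ℕ} (hv : L.re v ^ 2 + L.im v ^ 2 = 5 * (d * q + s)) : Q v = 5 * q + r := by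
    rw [hnorm] at hv
    refine Nat.eq_of_mul_eq_mul_left (Nat.pos_of_ne_zero hd) ?_
    zify
    linear_combination hv - hds'
  have hQPi (w : ι) : Q (L.mulPi w) = 5 * Q w + r :=
    hQ (by rw [re_mulPi, im_mulPi, ← hnorm]; ring)
  refine h.dissect_add_X_pow_mul_pow hr L.mulPi_injective L.mulPiConj_injective
    L.mulFive_injective ?_ L.range_mulPi_inter_range_mulPiConj hQPi ?_ ?_ hcPi hcFive
  · intro v hv
    rw [Set.mem_union, mem_range_mulPi, mem_range_mulPiConj]
    refine five_dvd_sub_or_five_dvd_add ⟨d * (Q v / 5 : ℕ) + s, ?_⟩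
    have hdiv : (Q v : ℤ) = 5 * (Q v / 5 : ℕ) + r := by lia
    rw [hnorm]
    linear_combination d * hdiv + hds'
  · intro w
    exact hQ (by rw [re_mulPiConj, im_mulPiConj, ← hnorm]; ring)
  · intro w
    refine hQ ?_
    rw [re_mulFive, im_mulFive]
    push_cast
    linear_combination 25 * hnorm w - 5 * hds'

/-- The coset of even Gaussian integers `2x + 2yi`; dividing its norms by `4` leaves the exponents
`x² + y²` of the square of Gauss' theta series. -/
def evenEven : GaussianCoset (ℤ × ℤ) where
  re v := 2 * v.1
  im v := 2 * v.2
  ext_re_im v w hre him := Prod.ext (by lia) (by lia)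
  exists_of_even_sub v x y hx hy := ⟨(x / 2, y / 2), by grind, by grind⟩
  mulPi w := (w.1 - 2 * w.2, w.2 + 2 * w.1)
  mulPiConj w := (w.1 + 2 * w.2, w.2 - 2 * w.1)
  mulFive w := (5 * w.1, 5 * w.2)
  re_mulPi w := by ring
  im_mulPi w := by ring
  re_mulPiConj w := by ring
  im_mulPiConj w := by ring
  re_mulFive w := by ring
  im_mulFive w := by ring

/-- The coset of Gaussian integers `(2x + 1) + (2y + 1)i`, whose norms are
`8 (triangular x + triangular y) + 2`. -/
def oddOdd : GaussianCoset (ℤ × ℤ) where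
  re v := 2 * v.1 + 1
  im v := 2 * v.2 + 1
  ext_re_im v w hre him := Prod.ext (by lia) (by lia)
  exists_of_even_sub v x y hx hy := ⟨(x / 2, y / 2), by grind, by grind⟩
  mulPi w := (w.1 - 2 * w.2 - 1, w.2 + 2 * w.1 + 1)
  mulPiConj w := (w.1 + 2 * w.2 + 1, w.2 - 2 * w.1 - 1)
  mulFive w := (5 * w.1 + 2, 5 * w.2 + 2)
  re_mulPi w := by ring
  im_mulPi w := by ring
  re_mulPiConj w := by ring
  im_mulPiConj w := by ring
  re_mulFive w := by ring
  im_mulFive w := by ring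

/-- The coset of Gaussian integers `2x + (2y + 1)i`, whose norms are
`4 (x² + 2 * triangular y) + 1`. -/
def evenOdd : GaussianCoset (ℤ × ℤ) where
  re v := 2 * v.1
  im v := 2 * v.2 + 1
  ext_re_im v w hre him := Prod.ext (by lia) (by lia)
  exists_of_even_sub v x y hx hy := ⟨(x / 2, y / 2), by grind, by grind⟩
  mulPi w := (w.1 - 2 * w.2 - 1, w.2 + 2 * w.1)
  mulPiConj w := (w.1 + 2 * w.2 + 1, w.2 - 2 * w.1)
  mulFive w := (5 * w.1, 5 * w.2 + 2)
  re_mulPi w := by ring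
  im_mulPi w := by ring
  re_mulPiConj w := by ring
  im_mulPiConj w := by ring
  re_mulFive w := by ring
  im_mulFive w := by ring

end GaussianCoset

section ThetaExpansions

variable {R : Type*} [CommRing R] [TopologicalSpace R] [T2Space R] [IsTopologicalRing R]

theorem isThetaSeries_gaussTheta :
    IsThetaSeries (fun k : ℤ ↦ k.natAbs ^ 2) (fun k ↦ (-1 : R) ^ k.natAbs) (gaussTheta X) where
  tendsto := tendsto_cofinite_of_natAbs_le fun k ↦ by nlinarith
  hasSum := by
    convert hasSum_gaussTheta (dvd_refl (X : R⟦X⟧)) using 2 with k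
    have hsign : (-1 : R) ^ k.natAbs = (-1) ^ k.natAbs ^ 2 := neg_one_pow_congr (by grind)
    rw [neg_pow X, monomial_eq_C_mul_X_pow, hsign, map_pow, map_neg, map_one]

theorem isThetaSeries_triangularTheta :
    IsThetaSeries triangular (fun _ ↦ (1 : R)) (triangularTheta X) where
  tendsto := tendsto_cofinite_of_natAbs_le natAbs_le_triangular_add_one
  hasSum := by simpa only [X_pow_eq] using hasSum_triangularTheta (dvd_refl (X : R⟦X⟧))

theorem isThetaSeries_two_mul_eulerProd_cube :
    IsThetaSeries (fun k ↦ 2 * triangular k) (fun k ↦ (-1 : R) ^ k.natAbs * (2 * k + 1))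
      (2 * eulerProd (X ^ 2) ^ 3) where
  tendsto := tendsto_cofinite_of_natAbs_le fun k ↦ by grind [natAbs_le_triangular_add_one k]
  hasSum := by
    convert hasSum_two_mul_eulerProd_cube (dvd_pow_self (X : R⟦X⟧) two_ne_zero) using 2 with k
    simp only [monomial_eq_C_mul_X_pow, pow_mul, map_mul, map_add, map_pow, map_neg, map_one,
      map_ofNat, map_intCast]

end ThetaExpansions

section Sign

variable {R : Type*} [CommRing R] {x y x' y' : ℤ}

theorem neg_one_pow_natAbs_mul_eq (h : Even (x + y) ↔ Even (x' + y')) :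
    (-1 : R) ^ x.natAbs * (-1) ^ y.natAbs = (-1) ^ x'.natAbs * (-1) ^ y'.natAbs := by
  rw [← pow_add, ← pow_add]
  exact neg_one_pow_congr (by grind)

theorem neg_one_pow_natAbs_mul_eq_neg (h : Even (x + y) ↔ Odd (x' + y')) :
    (-1 : R) ^ x.natAbs * (-1) ^ y.natAbs = -((-1) ^ x'.natAbs * (-1) ^ y'.natAbs) := by
  rw [← pow_add, ← pow_add, ← neg_one_mul ((-1) ^ _), ← pow_succ']
  exact neg_one_pow_congr (by grind)

end Sign

end HeckeFive

section ModFive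

open PowerSeries
open scoped PowerSeries.WithPiTopology Pointwise

local notation "φ" => (gaussTheta X : (ZMod 5)⟦X⟧)
local notation "ψ" => (triangularTheta X : (ZMod 5)⟦X⟧)
local notation "f₁" => (eulerProd X : (ZMod 5)⟦X⟧)
local notation "f₂" => (eulerProd (X ^ 2) : (ZMod 5)⟦X⟧)

theorem dissect_gaussTheta_sq : dissect 5 0 (φ ^ 2) = 2 * φ ^ 2 - φ ^ 10 := by
  have h := GaussianCoset.evenEven.dissect_five (d := 4) (r := 0) (s := 0) (m := 2) (m' := 1)
    (isThetaSeries_gaussTheta.mul isThetaSeries_gaussTheta) (by norm_num)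
    (fun v ↦ by
      simp only [GaussianCoset.evenEven]
      push_cast [Int.natCast_natAbs, sq_abs]
      ring)
    (by norm_num) (by norm_num)
    (fun w ↦ by
      simp only [GaussianCoset.evenEven]
      have hPi := neg_one_pow_natAbs_mul_eq (R := ZMod 5) (x := w.1 - 2 * w.2)
        (y := w.2 + 2 * w.1) (x' := w.1) (y' := w.2) (by grind)
      have hPiConj := neg_one_pow_natAbs_mul_eq (R := ZMod 5) (x := w.1 + 2 * w.2)
        (y := w.2 - 2 * w.1) (x' := w.1) (y' := w.2) (by grind)
      linear_combination hPi + hPiConj)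
    (fun w ↦ by
      simp only [GaussianCoset.evenEven]
      rw [neg_one_pow_natAbs_mul_eq (x' := w.1) (y' := w.2) (by grind), one_mul])
  simp only [map_one, map_ofNat, pow_zero, one_mul, ← sq φ] at h
  linear_combination h

theorem dissect_triangularTheta_sq : dissect 5 1 (ψ ^ 2) = 2 * ψ ^ 2 - X * ψ ^ 10 := by
  have h := GaussianCoset.oddOdd.dissect_five (r := 1) (d := 8) (s := 2) (m := 2) (m' := 1)
    (isThetaSeries_triangularTheta.mul isThetaSeries_triangularTheta) (by norm_num)
    (fun v ↦ by
      simp only [GaussianCoset.oddOdd]; push_cast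
      linear_combination -4 * two_mul_triangular v.1 - 4 * two_mul_triangular v.2)
    (by norm_num) (by norm_num) (fun _ ↦ by norm_num) (fun _ ↦ by norm_num)
  simp only [map_one, map_ofNat, pow_one, one_mul, ← sq ψ] at h
  linear_combination h

theorem dissect_gaussTheta_mul_eulerProd_cube :
    dissect 5 1 (φ * f₂ ^ 3) = -2 * (φ * f₂ ^ 3) := by
  have h := GaussianCoset.evenOdd.dissect_five (d := 4) (r := 1) (s := 1) (m := -2) (m' := 0)
    (isThetaSeries_gaussTheta.mul isThetaSeries_two_mul_eulerProd_cube) (by norm_num)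
    (fun v ↦ by
      simp only [GaussianCoset.evenOdd]
      push_cast [Int.natCast_natAbs, sq_abs]
      linear_combination -4 * two_mul_triangular v.2)
    (by norm_num) (by norm_num)
    (fun w ↦ by
      simp only [GaussianCoset.evenOdd]
      push_cast
      have hPi := neg_one_pow_natAbs_mul_eq_neg (R := ZMod 5) (x := w.1 - 2 * w.2 - 1)
        (y := w.2 + 2 * w.1) (x' := w.1) (y' := w.2) (by grind)
      have hPiConj := neg_one_pow_natAbs_mul_eq_neg (R := ZMod 5) (x := w.1 + 2 * w.2 + 1)
        (y := w.2 - 2 * w.1) (x' := w.1) (y' := w.2) (by grind)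
      linear_combination (2 * (w.2 + 2 * w.1) + 1) * hPi + (2 * (w.2 - 2 * w.1) + 1) * hPiConj)
    (fun w ↦ by
      have hweight : 2 * ((5 * w.2 + 2 : ℤ) : ZMod 5) + 1 = 0 := by
        push_cast
        ring_nf
        reduce_mod_char
      simp only [GaussianCoset.evenOdd, hweight, mul_zero, zero_mul])
  have htwo : (2 : (ZMod 5)⟦X⟧) ≠ 0 := by
    rw [← map_ofNat C]
    exact (map_ne_zero_iff _ C_injective).mpr (by decide)
  rw [map_zero, zero_mul, add_zero, mul_left_comm, two_mul, map_add, ← two_mul, map_neg,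
    map_ofNat] at h
  refine mul_left_cancel₀ htwo ?_
  linear_combination h

theorem supportedOn_gaussTheta_sub : SupportedOn ({1, 4} : Finset (ZMod 5)) (φ - φ ^ 25) := by
  have hsq : ∀ x : ZMod 5, x ≠ 0 → x ^ 2 ∈ ({1, 4} : Finset (ZMod 5)) := by decide
  have h := isThetaSeries_gaussTheta.supportedOn_sub (p := 5) (γ := fun k ↦ 5 * k)
    (mul_right_injective₀ (by norm_num)) (k := 2) (r := 0) (s := {1, 4})
    (fun w ↦ by rw [Int.natAbs_mul, mul_pow]; rfl) (fun w ↦ neg_one_pow_congr (by grind))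
    (fun v hv ↦ by
      have hne : (v : ZMod 5) ≠ 0 := fun h0 ↦
        hv ((ZMod.intCast_zmod_eq_zero_iff_dvd v 5).mp h0 |>.imp fun _ ↦ Eq.symm)
      simpa [← Int.cast_natCast (R := ZMod 5) (v.natAbs ^ 2)] using hsq v hne)
  simpa only [pow_zero, one_mul, Nat.reducePow] using h

theorem supportedOn_triangularTheta_sub :
    SupportedOn ({0, 1} : Finset (ZMod 5)) (ψ - X ^ 3 * ψ ^ 25) := by
  have hresidue : ∀ x t : ZMod 5, x ≠ 2 → 2 * t = x * (x + 1) → t ∈ ({0, 1} : Finset (ZMod 5)) := by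
    decide
  have h := isThetaSeries_triangularTheta.supportedOn_sub (p := 5) (γ := fun k ↦ 5 * k + 2)
    (fun _ _ h ↦ by simpa using h) (k := 2) (r := 3) (s := {0, 1})
    (fun w ↦ by grind [two_mul_triangular (5 * w + 2), two_mul_triangular w])
    (fun _ ↦ rfl)
    (fun v hv ↦ by
      refine hresidue v _ (fun h2 ↦ hv ?_) ?_
      · obtain ⟨k, hk⟩ := (ZMod.intCast_eq_intCast_iff_dvd_sub 2 v 5).mp (mod_cast h2.symm)
        exact ⟨k, by grind⟩
      · exact_mod_cast congrArg (Int.cast (R := ZMod 5)) (two_mul_triangular v))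
  simpa only [Nat.reducePow] using h

theorem supportedOn_eulerProd_cube : SupportedOn ({0, 2} : Finset (ZMod 5)) (f₂ ^ 3) := by
  have hresidue : ∀ x t : ZMod 5, 2 * x + 1 ≠ 0 → 2 * t = x * (x + 1) →
      2 * t ∈ ({0, 2} : Finset (ZMod 5)) := by
    decide
  have hθ := isThetaSeries_two_mul_eulerProd_cube (R := ZMod 5)
  have h := (hθ.C_mul 3).supportedOn (p := 5) (s := {0, 2})
    fun v hv ↦ by
      rw [Nat.cast_mul]
      exact hresidue v _ (fun h0 ↦ hv (by rw [h0, mul_zero, mul_zero]))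
        (mod_cast congrArg (Int.cast (R := ZMod 5)) (two_mul_triangular v))
  have hinv : (C 3 * 2 : (ZMod 5)⟦X⟧) = 1 := by
    rw [← map_ofNat C, ← map_mul, ← map_one C]
    exact congrArg C (by decide)
  rwa [← mul_assoc, hinv, one_mul] at h

theorem five_eq_zero : (5 : (ZMod 5)⟦X⟧) = 0 := CharP.ofNat_eq_zero _ 5

theorem dissect_gaussTheta : dissect 5 0 φ = φ ^ 5 := by
  have h := supportedOn_gaussTheta_sub.dissect_eq_zero (r := 0) (by decide)
  rwa [map_sub, sub_eq_zero, show φ ^ 25 = (φ ^ 5) ^ 5 by ring, dissect_pow] at h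

theorem dissect_gaussTheta_cube : dissect 5 0 (φ ^ 3) = φ ^ 7 := by
  have hcube := ((supportedOn_gaussTheta_sub.mul supportedOn_gaussTheta_sub).mul
    supportedOn_gaussTheta_sub).dissect_eq_zero (r := 0) (by decide)
  have hexpand : φ ^ 3 = (φ - φ ^ 25) * (φ - φ ^ 25) * (φ - φ ^ 25) + 3 • ((φ ^ 5) ^ 5 * φ ^ 2) -
      3 • ((φ ^ 10) ^ 5 * φ) + (φ ^ 15) ^ 5 := by
    ring
  rw [hexpand, map_add, map_sub, map_add, map_nsmul, map_nsmul, hcube, dissect_pow,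
    dissect_pow_mul (by norm_num), dissect_pow_mul (by norm_num), dissect_gaussTheta_sq,
    dissect_gaussTheta]
  linear_combination (φ ^ 7 - φ ^ 15) * five_eq_zero

theorem dissect_triangularTheta : dissect 5 3 ψ = ψ ^ 5 := by
  have h := supportedOn_triangularTheta_sub.dissect_eq_zero (r := 3) (by decide)
  rwa [map_sub, sub_eq_zero, show ψ ^ 25 = (ψ ^ 5) ^ 5 by ring, dissect_X_pow_mul 5 0 3,
    dissect_pow] at h

theorem dissect_triangularTheta_cube : dissect 5 4 (ψ ^ 3) = ψ ^ 7 := by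
  have hcube := ((supportedOn_triangularTheta_sub.mul supportedOn_triangularTheta_sub).mul
    supportedOn_triangularTheta_sub).dissect_eq_zero (r := 4) (by decide)
  have hexpand : ψ ^ 3 =
      (ψ - X ^ 3 * ψ ^ 25) * (ψ - X ^ 3 * ψ ^ 25) * (ψ - X ^ 3 * ψ ^ 25) +
        3 • (X ^ 3 * ((ψ ^ 5) ^ 5 * ψ ^ 2)) - 3 • (X ^ 1 * ((X * ψ ^ 10) ^ 5 * ψ)) +
          X ^ 4 * (X * ψ ^ 15) ^ 5 := by
    ring
  rw [hexpand, map_add, map_sub, map_add, map_nsmul, map_nsmul, hcube,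
    dissect_X_pow_mul 5 1 3, dissect_X_pow_mul 5 3 1, dissect_X_pow_mul 5 0 4,
    dissect_pow, dissect_pow_mul (by norm_num), dissect_pow_mul (by norm_num),
    dissect_triangularTheta_sq, dissect_triangularTheta]
  linear_combination (ψ ^ 7 - X * ψ ^ 15) * five_eq_zero

theorem dissect_gaussTheta_sq_mul_eulerProd_cube :
    dissect 5 1 (φ ^ 2 * f₂ ^ 3) = φ ^ 6 * f₂ ^ 3 := by
  have hsq := ((supportedOn_gaussTheta_sub.mul supportedOn_gaussTheta_sub).mul
    supportedOn_eulerProd_cube).dissect_eq_zero (r := 1) (by decide)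
  have hexpand : φ ^ 2 * f₂ ^ 3 = (φ - φ ^ 25) * (φ - φ ^ 25) * f₂ ^ 3 +
      2 • ((φ ^ 5) ^ 5 * (φ * f₂ ^ 3)) - (φ ^ 10) ^ 5 * f₂ ^ 3 := by
    ring
  rw [hexpand, map_sub, map_add, map_nsmul, hsq, dissect_pow_mul (by norm_num),
    dissect_pow_mul (by norm_num), dissect_gaussTheta_mul_eulerProd_cube,
    supportedOn_eulerProd_cube.dissect_eq_zero (by decide)]
  linear_combination -(φ ^ 6 * f₂ ^ 3) * five_eq_zero

/-- The generating function of `b5'` modulo `5`. -/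
noncomputable def b5'GenFun : (ZMod 5)⟦X⟧ :=
  mk fun n ↦ (b5' n : ZMod 5)

local notation "B" => b5'GenFun

theorem eulerProd_X_pow_ne_zero {m : ℕ} (hm : m ≠ 0) : (eulerProd (X ^ m) : (ZMod 5)⟦X⟧) ≠ 0 := by
  intro h
  have hcoeff := congrArg constantCoeff h
  rw [map_zero, eulerProd,
    (multipliable_one_sub_pow_succ (dvd_pow_self X hm)).map_tprod constantCoeff
      (WithPiTopology.continuous_constantCoeff _)] at hcoeff
  simp [hm] at hcoeff

theorem eulerProd_X_ne_zero : f₁ ≠ 0 := by simpa using eulerProd_X_pow_ne_zero one_ne_zero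

theorem eulerProd_X_sq_ne_zero : f₂ ≠ 0 := eulerProd_X_pow_ne_zero two_ne_zero

theorem b5'GenFun_mul_eulerProd_pow : B * f₂ ^ 4 = f₁ ^ 4 := by
  have hprod := tprod_one_add_pow_mul_eulerProd (dvd_refl (X : (ZMod 5)⟦X⟧))
  set P : (ZMod 5)⟦X⟧ := ∏' i : ℕ, (1 + X ^ (i + 1))
  have hpow := (multipliable_one_add_pow_succ (dvd_refl (X : (ZMod 5)⟦X⟧))).map_tprod
    (frobenius (ZMod 5)⟦X⟧ 5) (continuous_pow 5)
  simp only [map_add, map_one, map_pow, frobenius_def] at hpow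
  have hB : B * P ^ 5 = P :=
    hpow ▸ mk_card_distincts_filter_not_dvd_mul_tprod (by norm_num)
  have hne : P * f₁ ≠ 0 := hprod ▸ eulerProd_X_sq_ne_zero
  refine mul_right_cancel₀ hne ?_
  rw [← hprod]
  linear_combination f₁ ^ 5 * hB

theorem gaussTheta_mul_eulerProd_X : φ * f₂ = f₁ ^ 2 :=
  gaussTheta_mul_eulerProd dvd_rfl

theorem triangularTheta_mul_eulerProd_X : ψ * f₁ = 2 * f₂ ^ 2 :=
  triangularTheta_mul_eulerProd dvd_rfl

theorem dissect_b5'GenFun : dissect 5 1 B = φ ^ 6 * f₂ ^ 2 := by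
  have hB : f₂ ^ 5 * B = φ ^ 2 * f₂ ^ 3 := by
    linear_combination f₂ * b5'GenFun_mul_eulerProd_pow -
      f₂ * (φ * f₂ + f₁ ^ 2) * gaussTheta_mul_eulerProd_X
  refine mul_left_cancel₀ eulerProd_X_sq_ne_zero ?_
  rw [← dissect_pow_mul (by norm_num), hB, dissect_gaussTheta_sq_mul_eulerProd_cube]
  ring

theorem eulerProd_pow_mul_dissect_gaussTheta_pow_mul :
    f₁ ^ 4 * dissect 5 4 (φ ^ 6 * f₂ ^ 2) = f₂ ^ 12 := by
  have hψ : 8 • (f₂ ^ 5 * (φ * f₂ ^ 2)) = f₁ ^ 5 * ψ ^ 3 := by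
    have hcube : (ψ * f₁) ^ 3 = (2 * f₂ ^ 2) ^ 3 := congrArg (· ^ 3) triangularTheta_mul_eulerProd_X
    linear_combination 8 * f₂ ^ 6 * gaussTheta_mul_eulerProd_X - f₁ ^ 2 * hcube
  have hdissect := congrArg (dissect 5 4) hψ
  rw [map_nsmul, dissect_pow_mul (by norm_num), dissect_pow_mul (by norm_num),
    dissect_triangularTheta_cube] at hdissect
  rw [show φ ^ 6 * f₂ ^ 2 = φ ^ 5 * (φ * f₂ ^ 2) by ring, dissect_pow_mul (by norm_num)]
  set Z := dissect 5 4 (φ * f₂ ^ 2)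
  have hpow : (ψ * f₁) ^ 7 = (2 * f₂ ^ 2) ^ 7 := congrArg (· ^ 7) triangularTheta_mul_eulerProd_X
  have hne : f₁ ^ 2 * f₂ ≠ 0 :=
    mul_ne_zero (pow_ne_zero 2 eulerProd_X_ne_zero) eulerProd_X_sq_ne_zero
  refine mul_left_cancel₀ hne ?_
  linear_combination 2 * φ * f₁ ^ 6 * hdissect + 2 * φ * hpow +
    256 * f₂ ^ 13 * gaussTheta_mul_eulerProd_X -
    (3 * f₁ ^ 6 * f₂ * φ * Z - 51 * f₁ ^ 2 * f₂ ^ 13) * five_eq_zero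

theorem dissect_dissect_gaussTheta_pow_mul :
    dissect 5 0 (dissect 5 4 (φ ^ 6 * f₂ ^ 2)) = φ ^ 6 * f₂ ^ 2 := by
  have hφ : f₁ ^ 10 * dissect 5 4 (φ ^ 6 * f₂ ^ 2) = f₂ ^ 15 * φ ^ 3 := by
    calc
      _ = f₁ ^ 6 * f₂ ^ 12 := by rw [← eulerProd_pow_mul_dissect_gaussTheta_pow_mul]; ring
      _ = (f₁ ^ 2) ^ 3 * f₂ ^ 12 := by ring
      _ = f₂ ^ 15 * φ ^ 3 := by rw [← gaussTheta_mul_eulerProd_X]; ring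
  have hdissect := congrArg (dissect 5 0) hφ
  rw [show f₁ ^ 10 = (f₁ ^ 2) ^ 5 by ring, show f₂ ^ 15 = (f₂ ^ 3) ^ 5 by ring,
    dissect_pow_mul (by norm_num), dissect_pow_mul (by norm_num), dissect_gaussTheta_cube]
    at hdissect
  refine mul_left_cancel₀ (pow_ne_zero 2 eulerProd_X_ne_zero) ?_
  rw [hdissect, ← gaussTheta_mul_eulerProd_X]
  ring

end ModFive

end FiveRegular

open FiveRegular

theorem b5'_125n21_mod5 (n : ℕ) : b5' (125 * n + 21) ≡ b5' (5 * n + 1) [MOD 5] := by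
  have h := dissect_dissect_gaussTheta_pow_mul
  rw [← dissect_b5'GenFun] at h
  have hcoeff := congrArg (PowerSeries.coeff n) h
  simp only [coeff_dissect, b5'GenFun, PowerSeries.coeff_mk] at hcoeff
  rw [show 5 * (5 * (5 * n + 0) + 4) + 1 = 125 * n + 21 by ring] at hcoeff
  exact (ZMod.natCast_eq_natCast_iff _ _ _).mp hcoeff
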